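/- For all vectors a, b, c, d ∈ ℝ⁷: (1/12) Σ_{σ∈S₇} sgn(σ) a_{σ(1)} b_{σ(2)} (Σ_m c_m φ_{m σ(3) σ(4)}) (Σ_n d_n ψ_{n σ(5) σ(6) σ(7)}) = 2 (⟨a,c⟩⟨b,d⟩ − ⟨a,d⟩⟨b,c⟩) + Σ_{i,j,k,l} ψ_{ijkl} a_i b_j c_k d_l. (This is the coordinate form of the identity a♭ ∧ b♭ ∧ (c⌐φ) ∧ (d⌐ψ) = (2 g(a∧b, c∧d) + ψ(a,b,c,d)) vol for the standard G₂-structure.) -/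

import Mathlib

open Finset

noncomputable section

def phi0 : Fin 7 → Fin 7 → Fin 7 → ℝ := fun i j k =>
  if (i, j, k) = (0, 1, 2) then -1
  else if (i, j, k) = (0, 3, 4) then -1
  else if (i, j, k) = (0, 5, 6) then -1
  else if (i, j, k) = (1, 3, 5) then -1
  else if (i, j, k) = (1, 4, 6) then 1
  else if (i, j, k) = (2, 3, 6) then 1
  else if (i, j, k) = (2, 4, 5) then 1
  else 0

/-- The standard G₂ 3-form on ℝ⁷ (paper's orientation convention), as a totally
antisymmetric array with `φ₁₂₃ = φ₁₄₅ = φ₁₆₇ = φ₂₄₆ = −1`, `φ₂₅₇ = φ₃₄₇ = φ₃₅₆ = 1`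
(indices shifted to start at 0). -/
def phi (i j k : Fin 7) : ℝ :=
  ∑ σ : Equiv.Perm (Fin 3),
    ((Equiv.Perm.sign σ : ℤ) : ℝ) *
      phi0 (![i, j, k] (σ 0)) (![i, j, k] (σ 1)) (![i, j, k] (σ 2))

def psi0 : Fin 7 → Fin 7 → Fin 7 → Fin 7 → ℝ := fun i j k l =>
  if (i, j, k, l) = (0, 1, 3, 6) then 1
  else if (i, j, k, l) = (0, 1, 4, 5) then 1
  else if (i, j, k, l) = (0, 2, 3, 5) then 1
  else if (i, j, k, l) = (0, 2, 4, 6) then -1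
  else if (i, j, k, l) = (1, 2, 3, 4) then -1
  else if (i, j, k, l) = (1, 2, 5, 6) then -1
  else if (i, j, k, l) = (3, 4, 5, 6) then -1
  else 0

/-- The dual 4-form ψ = ∗φ of the standard G₂-structure, as a totally antisymmetric
array with `ψ₁₂₄₇ = ψ₁₂₅₆ = ψ₁₃₄₆ = 1`, `ψ₁₃₅₇ = ψ₂₃₄₅ = ψ₂₃₆₇ = ψ₄₅₆₇ = −1`
(indices shifted to start at 0). -/
def psi (i j k l : Fin 7) : ℝ :=
  ∑ σ : Equiv.Perm (Fin 4),
    ((Equiv.Perm.sign σ : ℤ) : ℝ) *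
      psi0 (![i, j, k, l] (σ 0)) (![i, j, k, l] (σ 1)) (![i, j, k, l] (σ 2))
        (![i, j, k, l] (σ 3))

/-- Kronecker delta. -/
def kdelta (i j : Fin 7) : ℝ := if i = j then 1 else 0

/-- The G₂ cross product on ℝ⁷: `(u × v)_k = Σ_{i,j} φ_{ijk} u_i v_j`. -/
def cross (u v : Fin 7 → ℝ) : Fin 7 → ℝ := fun k =>
  ∑ i, ∑ j, phi i j k * u i * v j

/-- Euclidean inner product on ℝ⁷. -/
def dot (u v : Fin 7 → ℝ) : ℝ := ∑ i, u i * v i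

end

/-!
Since `ψ = ∗φ`, every permutation `σ` satisfies `φ(σ₁, σ₂, σ₃) = sgn(σ) ψ(σ₄, σ₅, σ₆, σ₇)`, and
therefore `sgn(σ) (d ⌟ ψ)(σ₅, σ₆, σ₇) = -(d♭ ∧ φ)(σ₁, σ₂, σ₃, σ₄)`. The summand then depends only
on the first four values of `σ`. Such a 4-tuple of distinct indices extends to `3!` permutations,
and `d♭ ∧ φ` vanishes on tuples with a repeated index, so the sum over `S₇` equals `-3!` times the
full contraction of `a ⊗ b ⊗ (c ⌟ φ)` with `d♭ ∧ φ`. This contraction is evaluated by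
`∑ q, φ_{ijq} φ_{klq} = δ_{ik} δ_{jl} - δ_{il} δ_{jk} - ψ_{ijkl}` and its trace
`∑ p q, φ_{ipq} φ_{jpq} = 6 δ_{ij}`.
-/

section AlternatingArrays

open Equiv Equiv.Perm

variable {n : ℕ} {ι R : Type*} [CommRing R]

/-- An array with `n` indices in `ι`, as a function of the index tuple, is alternating if permuting
the indices multiplies its entries by the sign of the permutation. -/
def IsAlternatingArray (T : (Fin n → ι) → R) : Prop :=
  ∀ (v : Fin n → ι) (σ : Perm (Fin n)), T (v ∘ σ) = ((sign σ : ℤ) : R) * T v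

/-- The signed sum of an array over all permutations of its indices, without the factor `1 / n!`. -/
def antisymmetrize (T : (Fin n → ι) → R) (v : Fin n → ι) : R :=
  ∑ σ : Perm (Fin n), ((sign σ : ℤ) : R) * T (v ∘ σ)

theorem sign_cast_mul_self (σ : Perm (Fin n)) :
    ((sign σ : ℤ) : R) * ((sign σ : ℤ) : R) = 1 := by
  rw [← Int.cast_mul, ← Units.val_mul, Int.units_mul_self, Units.val_one, Int.cast_one]

theorem strictMono_comp_sort [LinearOrder ι] {v : Fin n → ι} (hv : Function.Injective v) :
    StrictMono (v ∘ Tuple.sort v) :=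
  (Tuple.monotone_sort v).strictMono_of_injective (hv.comp (Tuple.sort v).injective)

theorem strictMono_fin_three [Preorder ι] {v : Fin 3 → ι} :
    StrictMono v ↔ v 0 < v 1 ∧ v 1 < v 2 := by
  simp [Fin.strictMono_iff_lt_succ, Fin.forall_fin_succ]

theorem strictMono_fin_four [Preorder ι] {v : Fin 4 → ι} :
    StrictMono v ↔ v 0 < v 1 ∧ v 1 < v 2 ∧ v 2 < v 3 := by
  simp [Fin.strictMono_iff_lt_succ, Fin.forall_fin_succ]

theorem isAlternatingArray_antisymmetrize (T : (Fin n → ι) → R) :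
    IsAlternatingArray (antisymmetrize T) := by
  intro v τ
  calc antisymmetrize T (v ∘ τ)
      = ∑ σ, ((sign τ : ℤ) : R) * (((sign (τ * σ) : ℤ) : R) * T (v ∘ ⇑(τ * σ))) := by
        refine Finset.sum_congr rfl fun σ _ => ?_
        rw [Perm.sign_mul, Units.val_mul, Int.cast_mul, ← mul_assoc, ← mul_assoc,
          sign_cast_mul_self, one_mul, Perm.coe_mul, Function.comp_assoc]
    _ = ((sign τ : ℤ) : R) * antisymmetrize T v := by
        rw [← Finset.mul_sum, antisymmetrize]
        congr 1
        exact Fintype.sum_equiv (Equiv.mulLeft τ) _ _ fun σ => rfl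

theorem isAlternatingArray_of_adjacent_swap {T : (Fin (n + 1) → ι) → R}
    (hT : ∀ v (i : Fin n), T (v ∘ swap i.castSucc i.succ) = -T v) : IsAlternatingArray T := by
  intro v σ
  have hσ : σ ∈ Submonoid.closure (Set.range fun i : Fin n => swap i.castSucc i.succ) := by
    rw [mclosure_swap_castSucc_succ]
    exact Submonoid.mem_top σ
  induction hσ using Submonoid.closure_induction generalizing v with
  | mem _ hτ =>
    obtain ⟨i, rfl⟩ := hτ
    simp [hT, sign_swap i.castSucc_lt_succ.ne]
  | one => simp
  | mul σ τ _ _ hσ hτ =>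
    rw [Perm.coe_mul, ← Function.comp_assoc, hτ, hσ, Perm.sign_mul, Units.val_mul, Int.cast_mul]
    ring

theorem isAlternatingArray_three {f : ι → ι → ι → R} (swap₀₁ : ∀ i j k, f j i k = -f i j k)
    (swap₁₂ : ∀ i j k, f i k j = -f i j k) :
    IsAlternatingArray fun v : Fin 3 → ι => f (v 0) (v 1) (v 2) := by
  refine isAlternatingArray_of_adjacent_swap fun v i => ?_
  fin_cases i
  · exact swap₀₁ _ _ _
  · exact swap₁₂ _ _ _

theorem isAlternatingArray_four {f : ι → ι → ι → ι → R}
    (swap₀₁ : ∀ i j k l, f j i k l = -f i j k l) (swap₁₂ : ∀ i j k l, f i k j l = -f i j k l)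
    (swap₂₃ : ∀ i j k l, f i j l k = -f i j k l) :
    IsAlternatingArray fun v : Fin 4 → ι => f (v 0) (v 1) (v 2) (v 3) := by
  refine isAlternatingArray_of_adjacent_swap fun v i => ?_
  fin_cases i
  · exact swap₀₁ _ _ _ _
  · exact swap₁₂ _ _ _ _
  · exact swap₂₃ _ _ _ _

namespace IsAlternatingArray

variable {T S : (Fin n → ι) → R}

theorem apply_swap (hT : IsAlternatingArray T) (v : Fin n → ι) {i j : Fin n} (hij : i ≠ j) :
    T (v ∘ swap i j) = -T v := by
  rw [hT v, sign_swap hij]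
  simp

theorem eq_zero_of_eq [IsAddTorsionFree R] (hT : IsAlternatingArray T) {v : Fin n → ι}
    {i j : Fin n} (hij : i ≠ j) (hv : v i = v j) : T v = 0 := by
  have hswap := hT.apply_swap v hij
  rwa [comp_swap_eq_update, hv, Function.update_eq_self_iff.2 rfl, ← hv,
    Function.update_eq_self, self_eq_neg] at hswap

theorem eq_zero_of_not_injective [IsAddTorsionFree R] (hT : IsAlternatingArray T) {v : Fin n → ι}
    (hv : ¬ Function.Injective v) : T v = 0 := by
  obtain ⟨i, j, hvij, hij⟩ := Function.not_injective_iff.1 hv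
  exact hT.eq_zero_of_eq hij hvij

variable [LinearOrder ι]

theorem ext_of_strictMono [IsAddTorsionFree R] (hT : IsAlternatingArray T)
    (hS : IsAlternatingArray S) (h : ∀ v, StrictMono v → T v = S v) : T = S := by
  funext v
  by_cases hv : Function.Injective v
  · have hsigned := h _ (strictMono_comp_sort hv)
    rw [hT, hS] at hsigned
    simpa only [← mul_assoc, sign_cast_mul_self, one_mul] using
      congrArg (((sign (Tuple.sort v) : ℤ) : R) * ·) hsigned
  · rw [hT.eq_zero_of_not_injective hv, hS.eq_zero_of_not_injective hv]

end IsAlternatingArray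

theorem antisymmetrize_apply_of_strictMono [LinearOrder ι] {T : (Fin n → ι) → R}
    (hT : ∀ v, T v ≠ 0 → StrictMono v) {v : Fin n → ι} (hv : StrictMono v) :
    antisymmetrize T v = T v := by
  rw [antisymmetrize, Fintype.sum_eq_single 1]
  · simp
  · intro σ hσ
    suffices ¬ StrictMono (v ∘ σ) by rw [not_not.1 (mt (hT _) this), mul_zero]
    intro hvσ
    have hcomp : v ∘ σ = v ∘ (1 : Perm (Fin n)) := Tuple.unique_monotone hvσ.monotone hv.monotone
    exact hσ (Equiv.ext fun i => hv.injective (congrFun hcomp i))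

theorem antisymmetrize_eq_of_strictMono [LinearOrder ι] [IsAddTorsionFree R]
    {T S : (Fin n → ι) → R} (hT : ∀ v, T v ≠ 0 → StrictMono v) (hS : IsAlternatingArray S)
    (h : ∀ v, StrictMono v → T v = S v) : antisymmetrize T = S :=
  (isAlternatingArray_antisymmetrize T).ext_of_strictMono hS fun v hv =>
    (antisymmetrize_apply_of_strictMono hT hv).trans (h v hv)

/-- Both sides change by the same sign when `σ` is precomposed with a permutation of each block,
and sorting each block turns `σ` into a shuffle. -/
theorem IsAlternatingArray.eq_sign_mul_of_shuffle {p q : ℕ} {A : (Fin p → Fin (p + q)) → R}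
    {B : (Fin q → Fin (p + q)) → R} (hA : IsAlternatingArray A) (hB : IsAlternatingArray B)
    (h : ∀ σ : Perm (Fin (p + q)), StrictMono (σ ∘ Fin.castAdd q) → StrictMono (σ ∘ Fin.natAdd p) →
      A (σ ∘ Fin.castAdd q) = ((sign σ : ℤ) : R) * B (σ ∘ Fin.natAdd p))
    (σ : Perm (Fin (p + q))) :
    A (σ ∘ Fin.castAdd q) = ((sign σ : ℤ) : R) * B (σ ∘ Fin.natAdd p) := by
  set u := σ ∘ Fin.castAdd q with hu
  set w := σ ∘ Fin.natAdd p with hw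
  set sorted :=
    σ * finSumFinEquiv.permCongr (Perm.sumCongr (Tuple.sort u) (Tuple.sort w)) with hsorted
  have hleft : sorted ∘ Fin.castAdd q = u ∘ Tuple.sort u := by
    ext i
    simp [hsorted, hu, permCongr_apply]
  have hright : sorted ∘ Fin.natAdd p = w ∘ Tuple.sort w := by
    ext i
    simp [hsorted, hw, permCongr_apply]
  have hsign : sign sorted = sign σ * (sign (Tuple.sort u) * sign (Tuple.sort w)) := by
    rw [hsorted, Perm.sign_mul, sign_permCongr, sign_sumCongr]
  have key := h sorted
    (hleft ▸ strictMono_comp_sort (σ.injective.comp (Fin.castAdd_injective p q)))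
    (hright ▸ strictMono_comp_sort (σ.injective.comp (Fin.natAdd_injective q p)))
  rw [hleft, hright, hA, hB, hsign] at key
  push_cast at key
  linear_combination ((sign (Tuple.sort u) : ℤ) : R) * key
    - (A u - (sign σ : ℤ) * B w * ((sign (Tuple.sort w) : ℤ) : R) ^ 2) *
        sign_cast_mul_self (R := R) (Tuple.sort u)
    + (sign σ : ℤ) * B w * sign_cast_mul_self (R := R) (Tuple.sort w)

end AlternatingArrays

section SumsOverPermutations

open Equiv

variable {M : Type*} [AddCommMonoid M]

theorem card_embedding_compl_range {p q : ℕ} (f : Fin p ↪ Fin (p + q)) :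
    Fintype.card (Fin q ↪ ↥(Set.range f)ᶜ) = q.factorial := by
  rw [Fintype.card_embedding_eq, Fintype.card_compl_set, Set.card_range_of_injective f.injective]
  simp [Nat.descFactorial_self]

theorem sum_perm_comp_castAdd {p q : ℕ} (F : (Fin p → Fin (p + q)) → M) :
    ∑ σ : Perm (Fin (p + q)), F (σ ∘ Fin.castAdd q) =
      q.factorial • ∑ f : Fin p ↪ Fin (p + q), F f := by
  classical
  let e : Perm (Fin (p + q)) ≃ Σ f : Fin p ↪ Fin (p + q), Fin q ↪ ↥(Set.range f)ᶜ :=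
    (embeddingEquivOfFinite _).symm.trans <|
      (embeddingCongr finSumFinEquiv.symm (Equiv.refl _)).trans
        sumEmbeddingEquivSigmaEmbeddingRestricted
  calc ∑ σ : Perm (Fin (p + q)), F (σ ∘ Fin.castAdd q)
      = ∑ x : Σ f : Fin p ↪ Fin (p + q), Fin q ↪ ↥(Set.range f)ᶜ, F x.1 :=
        Fintype.sum_equiv e _ _ fun σ => rfl
    _ = q.factorial • ∑ f : Fin p ↪ Fin (p + q), F f := by
        simp only [Fintype.sum_sigma, Finset.sum_const, Finset.card_univ,
          card_embedding_compl_range, Finset.smul_sum]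

theorem sum_embedding_eq_sum_of_not_injective {α β : Type*} [Fintype α] [DecidableEq α] [Fintype β]
    {F : (α → β) → M} (hF : ∀ f, ¬ Function.Injective f → F f = 0) :
    ∑ f : α ↪ β, F f = ∑ f : α → β, F f := by
  classical
  exact Finset.sum_of_injOn (⇑) DFunLike.coe_injective.injOn (by simp)
    (fun f _ hf => hF f fun hinj => hf ⟨⟨f, hinj⟩, by simp, rfl⟩) fun _ _ => rfl

theorem sum_fin_succ_fun {n : ℕ} {α : Type*} [Fintype α] (F : (Fin (n + 1) → α) → M) :
    ∑ v, F v = ∑ x, ∑ w : Fin n → α, F (Fin.cons x w) := by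
  rw [← Fintype.sum_prod_type', ← (Fin.consEquiv fun _ : Fin (n + 1) => α).sum_comp]
  rfl

theorem sum_fin_four_fun {α : Type*} [Fintype α] (F : α → α → α → α → M) :
    ∑ v : Fin 4 → α, F (v 0) (v 1) (v 2) (v 3) = ∑ i, ∑ j, ∑ k, ∑ l, F i j k l := by
  simp only [sum_fin_succ_fun, Fintype.sum_unique]
  rfl

end SumsOverPermutations

section G2Structure

/-- Integer copy of `phi0`, on which identities between entries are decidable. -/
def phi0Int (i j k : Fin 7) : ℤ :=
  if (i, j, k) = (0, 1, 2) then -1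
  else if (i, j, k) = (0, 3, 4) then -1
  else if (i, j, k) = (0, 5, 6) then -1
  else if (i, j, k) = (1, 3, 5) then -1
  else if (i, j, k) = (1, 4, 6) then 1
  else if (i, j, k) = (2, 3, 6) then 1
  else if (i, j, k) = (2, 4, 5) then 1
  else 0

/-- Integer copy of `psi0`, on which identities between entries are decidable. -/
def psi0Int (i j k l : Fin 7) : ℤ :=
  if (i, j, k, l) = (0, 1, 3, 6) then 1
  else if (i, j, k, l) = (0, 1, 4, 5) then 1
  else if (i, j, k, l) = (0, 2, 3, 5) then 1
  else if (i, j, k, l) = (0, 2, 4, 6) then -1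
  else if (i, j, k, l) = (1, 2, 3, 4) then -1
  else if (i, j, k, l) = (1, 2, 5, 6) then -1
  else if (i, j, k, l) = (3, 4, 5, 6) then -1
  else 0

/-- The signs in the multiplication table `eᵢ × eⱼ = ± eₖ` of the G₂ cross product. -/
def crossSign : Fin 7 → Fin 7 → ℤ :=
  ![![0, -1, 1, -1, 1, -1, 1],
    ![1, 0, -1, -1, 1, 1, -1],
    ![-1, 1, 0, 1, 1, -1, -1],
    ![1, 1, -1, 0, -1, -1, 1],
    ![-1, -1, -1, 1, 0, 1, 1],
    ![1, -1, 1, 1, -1, 0, -1],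
    ![-1, 1, 1, -1, -1, 1, 0]]

/-- All entries of `φ`. With indices counted from 1 and read as nonzero vectors of `𝔽₂³`, the
triples supporting `φ` are the lines of the Fano plane, so the third index is the bitwise sum of the
other two. -/
def fanoPhi (i j k : Fin 7) : ℤ :=
  if (i.val + 1) ^^^ (j.val + 1) = k.val + 1 then crossSign i j else 0

/-- All entries of `ψ`, obtained from those of `φ` by solving the contraction identity
`φ_{ijq} φ_{klq} = δ_{ik} δ_{jl} - δ_{il} δ_{jk} - ψ_{ijkl}` for `ψ`. -/
def fanoPsi (i j k l : Fin 7) : ℤ :=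
  (if i = k ∧ j = l then 1 else 0) - (if i = l ∧ j = k then 1 else 0) -
    ∑ q, fanoPhi i j q * fanoPhi k l q

theorem phi0_eq_phi0Int (i j k : Fin 7) : phi0 i j k = (phi0Int i j k : ℝ) := by
  simp only [phi0, phi0Int, Int.cast_ite, Int.cast_neg, Int.cast_one, Int.cast_zero]

theorem psi0_eq_psi0Int (i j k l : Fin 7) : psi0 i j k l = (psi0Int i j k l : ℝ) := by
  simp only [psi0, psi0Int, Int.cast_ite, Int.cast_neg, Int.cast_one, Int.cast_zero]

theorem lt_and_lt_of_phi0Int_ne_zero :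
    ∀ i j k, phi0Int i j k ≠ 0 → i < j ∧ j < k := by
  decide +kernel

theorem lt_and_lt_and_lt_of_psi0Int_ne_zero :
    ∀ i j k l, psi0Int i j k l ≠ 0 → i < j ∧ j < k ∧ k < l := by
  decide +kernel

theorem phi0Int_eq_fanoPhi : ∀ i, ∀ j > i, ∀ k > j, phi0Int i j k = fanoPhi i j k := by
  decide +kernel

theorem psi0Int_eq_fanoPsi :
    ∀ i, ∀ j > i, ∀ k > j, ∀ l > k, psi0Int i j k l = fanoPsi i j k l := by
  decide +kernel

theorem isAlternatingArray_fanoPhi :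
    IsAlternatingArray fun v : Fin 3 → Fin 7 => fanoPhi (v 0) (v 1) (v 2) :=
  isAlternatingArray_three (by decide +kernel) (by decide +kernel)

theorem isAlternatingArray_fanoPsi :
    IsAlternatingArray fun v : Fin 4 → Fin 7 => fanoPsi (v 0) (v 1) (v 2) (v 3) :=
  isAlternatingArray_four (by decide +kernel) (by decide +kernel) (by decide +kernel)

theorem phi_eq_fanoPhi (i j k : Fin 7) : phi i j k = (fanoPhi i j k : ℝ) := by
  have h : antisymmetrize (fun v : Fin 3 → Fin 7 => phi0 (v 0) (v 1) (v 2)) =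
      fun v => (fanoPhi (v 0) (v 1) (v 2) : ℝ) := by
    refine antisymmetrize_eq_of_strictMono (fun v hv => ?_)
      (fun v σ => mod_cast isAlternatingArray_fanoPhi v σ) fun v hv => ?_
    · rw [phi0_eq_phi0Int, Int.cast_ne_zero] at hv
      exact strictMono_fin_three.2 (lt_and_lt_of_phi0Int_ne_zero _ _ _ hv)
    · obtain ⟨h₀₁, h₁₂⟩ := strictMono_fin_three.1 hv
      rw [phi0_eq_phi0Int, phi0Int_eq_fanoPhi _ _ h₀₁ _ h₁₂]
  exact congrFun h ![i, j, k]

theorem psi_eq_fanoPsi (i j k l : Fin 7) : psi i j k l = (fanoPsi i j k l : ℝ) := by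
  have h : antisymmetrize (fun v : Fin 4 → Fin 7 => psi0 (v 0) (v 1) (v 2) (v 3)) =
      fun v => (fanoPsi (v 0) (v 1) (v 2) (v 3) : ℝ) := by
    refine antisymmetrize_eq_of_strictMono (fun v hv => ?_)
      (fun v σ => mod_cast isAlternatingArray_fanoPsi v σ) fun v hv => ?_
    · rw [psi0_eq_psi0Int, Int.cast_ne_zero] at hv
      exact strictMono_fin_four.2 (lt_and_lt_and_lt_of_psi0Int_ne_zero _ _ _ _ hv)
    · obtain ⟨h₀₁, h₁₂, h₂₃⟩ := strictMono_fin_four.1 hv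
      rw [psi0_eq_psi0Int, psi0Int_eq_fanoPsi _ _ h₀₁ _ h₁₂ _ h₂₃]
  exact congrFun h ![i, j, k, l]

theorem isAlternatingArray_phi :
    IsAlternatingArray fun v : Fin 3 → Fin 7 => phi (v 0) (v 1) (v 2) := by
  intro v σ
  simp only [phi_eq_fanoPhi]
  exact mod_cast isAlternatingArray_fanoPhi v σ

theorem isAlternatingArray_psi :
    IsAlternatingArray fun v : Fin 4 → Fin 7 => psi (v 0) (v 1) (v 2) (v 3) := by
  intro v σ
  simp only [psi_eq_fanoPsi]
  exact mod_cast isAlternatingArray_fanoPsi v σ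

theorem phi_swap₀₁ (i j k : Fin 7) : phi j i k = -phi i j k :=
  isAlternatingArray_phi.apply_swap ![i, j, k] (i := 0) (j := 1) (by decide)

theorem phi_swap₁₂ (i j k : Fin 7) : phi i k j = -phi i j k :=
  isAlternatingArray_phi.apply_swap ![i, j, k] (i := 1) (j := 2) (by decide)

theorem sum_phi_mul_phi (i j k l : Fin 7) :
    ∑ q, phi i j q * phi k l q =
      kdelta i k * kdelta j l - kdelta i l * kdelta j k - psi i j k l := by
  have hδ (a b c d : Fin 7) : kdelta a b * kdelta c d = if a = b ∧ c = d then 1 else 0 := by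
    simp only [kdelta, ite_and, mul_ite, mul_one, mul_zero]
    split_ifs <;> rfl
  simp only [phi_eq_fanoPhi, psi_eq_fanoPsi, fanoPsi, hδ]
  push_cast
  ring

theorem sum_sum_phi_mul_phi (i j : Fin 7) :
    ∑ p, ∑ q, phi i p q * phi j p q = 6 * kdelta i j := by
  have hψ (p : Fin 7) : psi i p j p = 0 :=
    isAlternatingArray_psi.eq_zero_of_eq (v := ![i, p, j, p]) (i := 1) (j := 3) (by decide) rfl
  simp only [sum_phi_mul_phi, hψ, Finset.sum_sub_distrib, ← Finset.mul_sum]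
  obtain rfl | hij := eq_or_ne i j
  · norm_num [kdelta]
  · simp [kdelta, hij]

theorem fanoPhi_eq_sign_mul_fanoPsi :
    ∀ i : Fin 7, ∀ j > i, ∀ k > j, ∀ l : Fin 7, ∀ m > l, ∀ n > m, ∀ p > n,
      Function.Injective ![i, j, k, l, m, n, p] →
      fanoPhi i j k = (∏ x, ∏ y ∈ Ioi x,
        if ![i, j, k, l, m, n, p] x < ![i, j, k, l, m, n, p] y then 1 else -1) *
          fanoPsi l m n p := by
  decide +kernel

theorem phi_eq_sign_mul_psi (σ : Equiv.Perm (Fin 7)) :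
    phi (σ 0) (σ 1) (σ 2) =
      ((Equiv.Perm.sign σ : ℤ) : ℝ) * psi (σ 3) (σ 4) (σ 5) (σ 6) := by
  refine IsAlternatingArray.eq_sign_mul_of_shuffle (p := 3) (q := 4)
    isAlternatingArray_phi isAlternatingArray_psi (fun σ hu hw => ?_) σ
  change Equiv.Perm (Fin 7) at σ
  change phi (σ 0) (σ 1) (σ 2) = ((Equiv.Perm.sign σ : ℤ) : ℝ) * psi (σ 3) (σ 4) (σ 5) (σ 6)
  obtain ⟨h₀₁, h₁₂⟩ : σ 0 < σ 1 ∧ σ 1 < σ 2 := strictMono_fin_three.1 hu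
  obtain ⟨h₃₄, h₄₅, h₅₆⟩ : σ 3 < σ 4 ∧ σ 4 < σ 5 ∧ σ 5 < σ 6 := strictMono_fin_four.1 hw
  have hσ : ![σ 0, σ 1, σ 2, σ 3, σ 4, σ 5, σ 6] = σ := by
    ext x
    fin_cases x <;> rfl
  have key := fanoPhi_eq_sign_mul_fanoPsi _ _ h₀₁ _ h₁₂ _ _ h₃₄ _ h₄₅ _ h₅₆
    (hσ.symm ▸ σ.injective)
  have hsign : (Equiv.Perm.sign σ : ℤ) = ∏ x, ∏ y ∈ Ioi x, if σ x < σ y then 1 else -1 := by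
    simp only [Equiv.Perm.sign_eq_prod_prod_Ioi, Units.coe_prod, apply_ite Units.val,
      Units.val_one, Units.val_neg]
  rw [hσ, ← hsign] at key
  rw [phi_eq_fanoPhi, psi_eq_fanoPsi]
  exact mod_cast key

/-- The components of the 4-form `d♭ ∧ φ`. -/
def wedgePhi (d : Fin 7 → ℝ) (i j k l : Fin 7) : ℝ :=
  d i * phi j k l - d j * phi i k l + d k * phi i j l - d l * phi i j k

theorem isAlternatingArray_wedgePhi (d : Fin 7 → ℝ) :
    IsAlternatingArray fun v : Fin 4 → Fin 7 => wedgePhi d (v 0) (v 1) (v 2) (v 3) := by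
  refine isAlternatingArray_four (fun i j k l => ?_) (fun i j k l => ?_) fun i j k l => ?_
  · simp only [wedgePhi, phi_swap₀₁ i j]
    ring
  · simp only [wedgePhi, phi_swap₀₁ j k, phi_swap₁₂ i j k]
    ring
  · simp only [wedgePhi, phi_swap₁₂ _ k l]
    ring

theorem sign_mul_psi_swap (σ : Equiv.Perm (Fin 7)) {x : Fin 7} (hx : x < 3) :
    ((Equiv.Perm.sign σ : ℤ) : ℝ) * psi (σ x) (σ 4) (σ 5) (σ 6) =
      -phi (σ (Equiv.swap x 3 0)) (σ (Equiv.swap x 3 1)) (σ (Equiv.swap x 3 2)) := by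
  have hfix (y : Fin 7) (hy : 3 < y) : Equiv.swap x 3 y = y :=
    Equiv.swap_apply_of_ne_of_ne (hx.trans hy).ne' hy.ne'
  have key := phi_eq_sign_mul_psi (σ * Equiv.swap x 3)
  simp only [Equiv.Perm.mul_apply, Equiv.Perm.sign_mul, Equiv.Perm.sign_swap hx.ne,
    Equiv.swap_apply_right, hfix 4 (by decide), hfix 5 (by decide), hfix 6 (by decide)] at key
  simp [key]

/-- Coordinate form of `d ⌟ ψ = -∗(d♭ ∧ φ)`. -/
theorem sign_mul_sum_psi_eq_neg_wedgePhi (d : Fin 7 → ℝ) (σ : Equiv.Perm (Fin 7)) :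
    ((Equiv.Perm.sign σ : ℤ) : ℝ) * ∑ n, d n * psi n (σ 4) (σ 5) (σ 6) =
      -wedgePhi d (σ 0) (σ 1) (σ 2) (σ 3) := by
  have hψ₄ : psi (σ 4) (σ 4) (σ 5) (σ 6) = 0 :=
    isAlternatingArray_psi.eq_zero_of_eq (v := ![σ 4, σ 4, σ 5, σ 6]) (i := 0) (j := 1)
      (by decide) rfl
  have hψ₅ : psi (σ 5) (σ 4) (σ 5) (σ 6) = 0 :=
    isAlternatingArray_psi.eq_zero_of_eq (v := ![σ 5, σ 4, σ 5, σ 6]) (i := 0) (j := 2)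
      (by decide) rfl
  have hψ₆ : psi (σ 6) (σ 4) (σ 5) (σ 6) = 0 :=
    isAlternatingArray_psi.eq_zero_of_eq (v := ![σ 6, σ 4, σ 5, σ 6]) (i := 0) (j := 3)
      (by decide) rfl
  have hψ₀ : ((Equiv.Perm.sign σ : ℤ) : ℝ) * psi (σ 0) (σ 4) (σ 5) (σ 6) =
      -phi (σ 3) (σ 1) (σ 2) := sign_mul_psi_swap σ (by decide)
  have hψ₁ : ((Equiv.Perm.sign σ : ℤ) : ℝ) * psi (σ 1) (σ 4) (σ 5) (σ 6) =
      -phi (σ 0) (σ 3) (σ 2) := sign_mul_psi_swap σ (by decide)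
  have hψ₂ : ((Equiv.Perm.sign σ : ℤ) : ℝ) * psi (σ 2) (σ 4) (σ 5) (σ 6) =
      -phi (σ 0) (σ 1) (σ 3) := sign_mul_psi_swap σ (by decide)
  rw [phi_swap₀₁ (σ 1), phi_swap₁₂ _ (σ 2)] at hψ₀
  rw [phi_swap₁₂ _ (σ 2)] at hψ₁
  rw [← Equiv.sum_comp σ fun n => d n * psi n (σ 4) (σ 5) (σ 6)]
  simp only [Fin.sum_univ_seven, hψ₄, hψ₅, hψ₆, wedgePhi]
  linear_combination d (σ 0) * hψ₀ + d (σ 1) * hψ₁ + d (σ 2) * hψ₂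
    - d (σ 3) * phi_eq_sign_mul_psi σ

theorem sum_kdelta_mul (i : Fin 7) (c : Fin 7 → ℝ) : ∑ k, kdelta i k * c k = c i := by
  simp [kdelta]

theorem sum_contract_mul {ι R : Type*} [Fintype ι] [NonUnitalSemiring R] (c : ι → R)
    (T : ι → ι → ι → R) (G : ι → ι → R) :
    ∑ k, ∑ l, (∑ m, c m * T m k l) * G k l = ∑ m, c m * ∑ k, ∑ l, T m k l * G k l := by
  simp only [Finset.sum_mul, Finset.mul_sum, mul_assoc]
  exact (Finset.sum_congr rfl fun k _ => Finset.sum_comm).trans Finset.sum_comm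

theorem sum_interior_phi_mul_phi (c : Fin 7 → ℝ) (j : Fin 7) :
    ∑ k, ∑ l, (∑ m, c m * phi m k l) * phi j k l = 6 * c j := by
  simp only [sum_contract_mul c phi, sum_sum_phi_mul_phi]
  simp [kdelta, mul_comm]

theorem sum_interior_phi_mul_mul_phi (c d : Fin 7 → ℝ) (i j : Fin 7) :
    ∑ k, ∑ l, (∑ m, c m * phi m k l) * (d k * phi i j l) =
      c i * d j - d i * c j - ∑ k, ∑ l, psi i j k l * c k * d l := by
  have hq (m k : Fin 7) : ∑ l, phi m k l * (d k * phi i j l) =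
      d k * (kdelta i m * kdelta j k - kdelta i k * kdelta j m - psi i j m k) := by
    rw [← sum_phi_mul_phi, Finset.mul_sum]
    exact Finset.sum_congr rfl fun l _ => by ring
  calc ∑ k, ∑ l, (∑ m, c m * phi m k l) * (d k * phi i j l)
      = ∑ m, ∑ k, (kdelta i m * c m * (kdelta j k * d k) - kdelta j m * c m * (kdelta i k * d k)
          - psi i j m k * c m * d k) := by
        simp only [sum_contract_mul c phi, hq, Finset.mul_sum]
        exact Finset.sum_congr rfl fun m _ => Finset.sum_congr rfl fun k _ => by ring
    _ = c i * d j - d i * c j - ∑ k, ∑ l, psi i j k l * c k * d l := by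
        simp only [Finset.sum_sub_distrib, ← Finset.sum_mul_sum, sum_kdelta_mul]
        ring

theorem sum_interior_phi_mul_wedgePhi (c d : Fin 7 → ℝ) (i j : Fin 7) :
    ∑ k, ∑ l, (∑ m, c m * phi m k l) * wedgePhi d i j k l =
      -4 * (c i * d j - d i * c j) - 2 * ∑ k, ∑ l, psi i j k l * c k * d l := by
  let ω (k l : Fin 7) : ℝ := ∑ m, c m * phi m k l
  have hω (k l : Fin 7) : ω l k = -ω k l := by
    simp only [ω, phi_swap₁₂ _ k l, mul_neg, Finset.sum_neg_distrib]
  have hswap : ∑ k, ∑ l, ω k l * (d l * phi i j k) = -∑ k, ∑ l, ω k l * (d k * phi i j l) := by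
    rw [Finset.sum_comm]
    simp only [← Finset.sum_neg_distrib, ← neg_mul, ← hω]
  calc ∑ k, ∑ l, ω k l * wedgePhi d i j k l
      = d i * ∑ k, ∑ l, ω k l * phi j k l - d j * ∑ k, ∑ l, ω k l * phi i k l
          + ∑ k, ∑ l, ω k l * (d k * phi i j l) - ∑ k, ∑ l, ω k l * (d l * phi i j k) := by
        simp only [Finset.mul_sum, ← Finset.sum_sub_distrib, ← Finset.sum_add_distrib]
        refine Finset.sum_congr rfl fun k _ => Finset.sum_congr rfl fun l _ => ?_
        rw [wedgePhi]
        ring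
    _ = _ := by
        rw [hswap, sum_interior_phi_mul_phi, sum_interior_phi_mul_phi,
          sum_interior_phi_mul_mul_phi]
        ring

theorem sum_perm_sign_mul_sum_psi (d : Fin 7 → ℝ) (F : Fin 7 → Fin 7 → Fin 7 → Fin 7 → ℝ) :
    ∑ σ : Equiv.Perm (Fin 7), ((Equiv.Perm.sign σ : ℤ) : ℝ) *
        (F (σ 0) (σ 1) (σ 2) (σ 3) * ∑ n, d n * psi n (σ 4) (σ 5) (σ 6)) =
      -6 * ∑ i, ∑ j, ∑ k, ∑ l, F i j k l * wedgePhi d i j k l := by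
  let G (i j k l : Fin 7) : ℝ := F i j k l * wedgePhi d i j k l
  have hG (v : Fin 4 → Fin 7) (hv : ¬ Function.Injective v) : G (v 0) (v 1) (v 2) (v 3) = 0 :=
    mul_eq_zero_of_right _ ((isAlternatingArray_wedgePhi d).eq_zero_of_not_injective hv)
  calc ∑ σ : Equiv.Perm (Fin 7), ((Equiv.Perm.sign σ : ℤ) : ℝ) *
        (F (σ 0) (σ 1) (σ 2) (σ 3) * ∑ n, d n * psi n (σ 4) (σ 5) (σ 6))
      = -∑ σ : Equiv.Perm (Fin 7), G (σ 0) (σ 1) (σ 2) (σ 3) := by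
        rw [← Finset.sum_neg_distrib]
        refine Finset.sum_congr rfl fun σ _ => ?_
        linear_combination F (σ 0) (σ 1) (σ 2) (σ 3) * sign_mul_sum_psi_eq_neg_wedgePhi d σ
    _ = -(Nat.factorial 3 • ∑ v : Fin 4 ↪ Fin 7, G (v 0) (v 1) (v 2) (v 3)) :=
        congrArg Neg.neg
          (sum_perm_comp_castAdd (p := 4) (q := 3) fun v => G (v 0) (v 1) (v 2) (v 3))
    _ = -(Nat.factorial 3 • ∑ i, ∑ j, ∑ k, ∑ l, G i j k l) := by
        rw [sum_embedding_eq_sum_of_not_injective hG, sum_fin_four_fun]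
    _ = -6 * ∑ i, ∑ j, ∑ k, ∑ l, G i j k l := by
        norm_num [Nat.factorial]

end G2Structure

/-- Proposition `vecvecphipsiprop` in coordinates:
a♭ ∧ b♭ ∧ (c⌐φ) ∧ (d⌐ψ) = (2 g(a∧b, c∧d) + ψ(a,b,c,d)) vol. -/
theorem vec_vec_phi_psi (a b c d : Fin 7 → ℝ) :
    (1/12) * ∑ σ : Equiv.Perm (Fin 7),
      ((Equiv.Perm.sign σ : ℤ) : ℝ) *
        (a (σ 0) * b (σ 1) * (∑ m, c m * phi m (σ 2) (σ 3)) *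
          (∑ n, d n * psi n (σ 4) (σ 5) (σ 6)))
      = 2 * (dot a c * dot b d - dot a d * dot b c)
        + ∑ i, ∑ j, ∑ k, ∑ l, psi i j k l * a i * b j * c k * d l := by
  have hcontract (i j : Fin 7) :
      ∑ k, ∑ l, a i * b j * (∑ m, c m * phi m k l) * wedgePhi d i j k l =
        -4 * (a i * c i * (b j * d j) - a i * d i * (b j * c j)) -
          2 * ∑ k, ∑ l, psi i j k l * a i * b j * c k * d l := by
    calc _ = a i * b j * ∑ k, ∑ l, (∑ m, c m * phi m k l) * wedgePhi d i j k l := by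
          simp only [mul_assoc, ← Finset.mul_sum]
      _ = -4 * (a i * c i * (b j * d j) - a i * d i * (b j * c j)) -
          2 * (a i * b j * ∑ k, ∑ l, psi i j k l * c k * d l) := by
          rw [sum_interior_phi_mul_wedgePhi]
          ring
      _ = _ := by
          congr 2
          simp only [Finset.mul_sum]
          exact Finset.sum_congr rfl fun k _ => Finset.sum_congr rfl fun l _ => by ring
  rw [sum_perm_sign_mul_sum_psi d fun i j k l => a i * b j * ∑ m, c m * phi m k l]
  simp only [hcontract, dot, Finset.sum_mul_sum, Finset.sum_sub_distrib, ← Finset.mul_sum]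
  ring
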